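/- Let (N, Ñ) be infinitesimal automorphisms of (H, H̃, S), with weight filtrations W^N, W^Ñ. Then S(a, b̃) = 0 whenever a ∈ Ker N ∩ W^N_{−1} and b̃ ∈ Ker Ñ, and also whenever a ∈ Ker N and b̃ ∈ Ker Ñ ∩ W^{Ñ}_{−1}; consequently S descends to a well-defined bilinear pairing (Ker N)/(Ker N ∩ W^N_{−1}) × (Ker Ñ)/(Ker Ñ ∩ W^{Ñ}_{−1}) → ℂ, and this descended pairing is non-degenerate. -/

import Mathlib

/-!
Moving along the weight filtration one graded piece at a time gives `ker (N ^ k) ≤ W (k - 1)` and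
`W (-k) ≤ range (N ^ k)`, so `ker N ⊓ W (-1) = ker N ⊓ range N`: inside `ker N`, the step `W (-1)`
can be replaced by the range of `N`.

Let `S : H → Dual H'` be bijective. By skew-adjointness, the functionals factoring through `N'`,
which are those vanishing on `ker N'`, correspond to `range N`, so `range N` is the orthogonal of
`ker N'`; and `range N'` is the orthogonal of `ker N` because a subspace is cut out by the linear
functionals vanishing on it. Hence the subspaces divided out are exactly the left and right kernels
of `S` restricted to `ker N × ker N'`.
-/

namespace Paper

/-! ### Bilinear pairings between two spaces -/

/-- A bilinear pairing between two complex vector spaces is non-degenerate. -/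
def Nondeg {M₁ M₂ : Type*} [AddCommGroup M₁] [Module ℂ M₁] [AddCommGroup M₂] [Module ℂ M₂]
    (S : M₁ →ₗ[ℂ] M₂ →ₗ[ℂ] ℂ) : Prop :=
  (∀ x : M₁, (∀ y : M₂, S x y = 0) → x = 0) ∧ (∀ y : M₂, (∀ x : M₁, S x y = 0) → y = 0)

/-- The orthogonal complement in `M₂` of a subspace `p ⊆ M₁`, with respect to a
bilinear pairing `S : M₁ × M₂ → ℂ`. -/
def rightOrtho {M₁ M₂ : Type*} [AddCommGroup M₁] [Module ℂ M₁] [AddCommGroup M₂] [Module ℂ M₂]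
    (S : M₁ →ₗ[ℂ] M₂ →ₗ[ℂ] ℂ) (p : Submodule ℂ M₁) : Submodule ℂ M₂ where
  carrier := {y | ∀ x ∈ p, S x y = 0}
  add_mem' := by
    intro a b ha hb x hx
    rw [map_add, ha x hx, hb x hx, add_zero]
  zero_mem' := by
    intro x hx
    simp
  smul_mem' := by
    intro c y hy x hx
    rw [map_smul, hy x hx, smul_zero]

/-- The orthogonal complement in `M₁` of a subspace `q ⊆ M₂`, with respect to a
bilinear pairing `S : M₁ × M₂ → ℂ`. -/
def leftOrtho {M₁ M₂ : Type*} [AddCommGroup M₁] [Module ℂ M₁] [AddCommGroup M₂] [Module ℂ M₂]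
    (S : M₁ →ₗ[ℂ] M₂ →ₗ[ℂ] ℂ) (q : Submodule ℂ M₂) : Submodule ℂ M₁ where
  carrier := {x | ∀ y ∈ q, S x y = 0}
  add_mem' := by
    intro a b ha hb y hy
    simp [map_add, ha y hy, hb y hy]
  zero_mem' := by
    intro y hy
    simp
  smul_mem' := by
    intro c x hx y hy
    simp [map_smul, hx y hy]

/-! ### Graded quotients -/

/-- The quotient of a subspace `p` by (the trace of) a subspace `q`. -/
abbrev GrQ {M : Type*} [AddCommGroup M] [Module ℂ M] (p q : Submodule ℂ M) :=
  p ⧸ Submodule.comap p.subtype q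

/-- The map induced on the quotients `p/q → p'/q'` by a linear map sending `p` into `p'`
and `q` into `q'`. -/
def inducedQuot {M₁ M₂ : Type*} [AddCommGroup M₁] [Module ℂ M₁] [AddCommGroup M₂] [Module ℂ M₂]
    (f : M₁ →ₗ[ℂ] M₂) (p q : Submodule ℂ M₁) (p' q' : Submodule ℂ M₂)
    (h1 : p ≤ Submodule.comap f p') (h2 : q ≤ Submodule.comap f q') :
    GrQ p q →ₗ[ℂ] GrQ p' q' :=
  Submodule.mapQ _ _ (f.restrict fun x hx => Submodule.mem_comap.mp (h1 hx))
    (by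
      intro x hx
      simp only [Submodule.mem_comap, Submodule.subtype_apply] at hx ⊢
      have hfx : f (x : M₁) ∈ q' := Submodule.mem_comap.mp (h2 hx)
      simpa [LinearMap.restrict_apply] using hfx)

variable {H : Type*} [AddCommGroup H] [Module ℂ H]

/-! ### Weight filtrations -/

/-- `W` is the weight filtration of the nilpotent endomorphism `N`: an increasing filtration,
equal to `0` for small indices and to the whole space for large indices, such that
`N (W i) ⊆ W (i - 2)` and such that for every `i ≥ 0` the map `Gr_i → Gr_{-i}` induced
by `N ^ i` on the graded pieces `Gr_i = W i / W (i-1)` is an isomorphism. -/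
structure IsWeightFiltration (N : Module.End ℂ H) (W : ℤ → Submodule ℂ H) : Prop where
  mono : Monotone W
  eventually_bot : ∃ a : ℤ, ∀ i ≤ a, W i = ⊥
  eventually_top : ∃ b : ℤ, ∀ i : ℤ, b ≤ i → W i = ⊤
  map_le : ∀ i : ℤ, W i ≤ Submodule.comap N (W (i - 2))
  gr_bijective : ∀ i : ℕ,
    ∀ (h1 : W (i : ℤ) ≤ Submodule.comap (N ^ i) (W (-(i : ℤ))))
      (h2 : W ((i : ℤ) - 1) ≤ Submodule.comap (N ^ i) (W (-(i : ℤ) - 1))),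
      Function.Bijective
        (inducedQuot (N ^ i) (W (i : ℤ)) (W ((i : ℤ) - 1)) (W (-(i : ℤ))) (W (-(i : ℤ) - 1))
          h1 h2)

section InfinitesimalAutomorphism

variable {R M M' P : Type*} [CommRing R] [AddCommGroup M] [Module R M] [AddCommGroup M']
  [Module R M'] [AddCommGroup P] [Module R P]

/-- The pair `(N, N')` is an infinitesimal automorphism of the pairing `S`: `(1 + εN, 1 + εN')`
preserves `S` to first order in `ε`, that is, `N'` is adjoint to `-N`. Unlike in the paper's
terminology, `N` and `N'` may be any endomorphisms, nilpotent or not. -/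
def IsInfinitesimalAutomorphism (S : M →ₗ[R] M' →ₗ[R] P) (N : Module.End R M)
    (N' : Module.End R M') : Prop :=
  ∀ a b, S (N a) b + S a (N' b) = 0

namespace IsInfinitesimalAutomorphism

theorem flip {S : M →ₗ[R] M' →ₗ[R] P} {N : Module.End R M} {N' : Module.End R M'}
    (h : IsInfinitesimalAutomorphism S N N') : IsInfinitesimalAutomorphism S.flip N' N :=
  fun b a => (add_comm _ _).trans (h a b)

theorem apply_eq_zero_of_mem_range {S : M →ₗ[R] M' →ₗ[R] P} {N : Module.End R M}
    {N' : Module.End R M'} (h : IsInfinitesimalAutomorphism S N N') {a : M} {b : M'}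
    (ha : a ∈ LinearMap.range N) (hb : b ∈ LinearMap.ker N') : S a b = 0 := by
  obtain ⟨c, rfl⟩ := ha
  simpa [LinearMap.mem_ker.mp hb] using h c b

variable {K V V' : Type*} [Field K] [AddCommGroup V] [Module K V] [AddCommGroup V'] [Module K V']
  {S : V →ₗ[K] V' →ₗ[K] K} {N : Module.End K V} {N' : Module.End K V'}

theorem mem_range_left_iff (h : IsInfinitesimalAutomorphism S N N') (hS : Function.Bijective S)
    {a : V} : a ∈ LinearMap.range N ↔ ∀ b ∈ LinearMap.ker N', S a b = 0 := by
  refine ⟨fun ha b hb => h.apply_eq_zero_of_mem_range ha hb, fun ha => ?_⟩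
  have ha' : S a ∈ LinearMap.range N'.dualMap := by
    rwa [LinearMap.range_dualMap_eq_dualAnnihilator_ker, Submodule.mem_dualAnnihilator]
  obtain ⟨φ, hφ⟩ := ha'
  obtain ⟨c, rfl⟩ := hS.surjective φ
  refine ⟨-c, hS.injective (LinearMap.ext fun b => ?_)⟩
  calc S (N (-c)) b = -S (N c) b := by simp
    _ = S c (N' b) := neg_eq_of_add_eq_zero_right (h c b)
    _ = S a b := LinearMap.congr_fun hφ b

theorem mem_range_right_iff (h : IsInfinitesimalAutomorphism S N N') (hS : Function.Bijective S)
    {b : V'} : b ∈ LinearMap.range N' ↔ ∀ a ∈ LinearMap.ker N, S a b = 0 := by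
  refine ⟨fun hb a ha => h.flip.apply_eq_zero_of_mem_range hb ha, fun hb => ?_⟩
  by_contra hb_range
  obtain ⟨φ, hφb, hφ⟩ := Submodule.exists_le_ker_of_notMem hb_range
  obtain ⟨a, rfl⟩ := hS.surjective φ
  refine hφb (hb a (hS.injective (LinearMap.ext fun c => ?_)))
  have hac : S a (N' c) = 0 := hφ ⟨c, rfl⟩
  simpa [hac] using h a c

end IsInfinitesimalAutomorphism

end InfinitesimalAutomorphism

section Descent

variable {R M M' P : Type*} [CommRing R] [AddCommGroup M] [Module R M] [AddCommGroup M']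
  [Module R M'] [AddCommGroup P] [Module R P]

theorem liftQ₂_nondegenerate (B : M →ₗ[R] M' →ₗ[R] P) {q : Submodule R M} {q' : Submodule R M'}
    (hq : q = LinearMap.ker B) (hq' : q' = LinearMap.ker B.flip) :
    (B.liftQ₂ q q' hq.le hq'.le).Nondegenerate := by
  constructor
  · rintro ⟨a⟩ ha
    refine (Submodule.Quotient.mk_eq_zero q).mpr (hq.ge ?_)
    exact LinearMap.ext fun b => ha (Submodule.Quotient.mk b)
  · rintro ⟨b⟩ hb
    refine (Submodule.Quotient.mk_eq_zero q').mpr (hq'.ge ?_)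
    exact LinearMap.ext fun a => hb (Submodule.Quotient.mk a)

theorem comap_subtype_eq_ker_domRestrict₁₂ (B : M →ₗ[R] M' →ₗ[R] P) {p q : Submodule R M}
    {p' : Submodule R M'} (hq : ∀ a ∈ p, a ∈ q ↔ ∀ b ∈ p', B a b = 0) :
    q.comap p.subtype = LinearMap.ker (B.domRestrict₁₂ p p') := by
  ext a
  simp [hq a a.2, LinearMap.ext_iff, LinearMap.domRestrict₁₂_apply]

end Descent

theorem Nondeg.bijective {M₁ M₂ : Type*} [AddCommGroup M₁] [Module ℂ M₁] [AddCommGroup M₂]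
    [Module ℂ M₂] [FiniteDimensional ℂ M₁] {S : M₁ →ₗ[ℂ] M₂ →ₗ[ℂ] ℂ} (hS : Nondeg S) :
    Function.Bijective S :=
  ⟨LinearMap.ker_eq_bot.mp (LinearMap.separatingLeft_iff_ker_eq_bot.mp hS.1),
    LinearMap.flip_injective_iff₁.mp
      (LinearMap.ker_eq_bot.mp (LinearMap.separatingRight_iff_flip_ker_eq_bot.mp hS.2))⟩

section InducedQuot

variable {M₁ M₂ : Type*} [AddCommGroup M₁] [Module ℂ M₁] [AddCommGroup M₂] [Module ℂ M₂]
  {f : M₁ →ₗ[ℂ] M₂} {p q : Submodule ℂ M₁} {p' q' : Submodule ℂ M₂}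
  {h1 : p ≤ p'.comap f} {h2 : q ≤ q'.comap f}

theorem inf_comap_le_of_inducedQuot_injective
    (h : Function.Injective (inducedQuot f p q p' q' h1 h2)) : p ⊓ q'.comap f ≤ q := by
  rintro x ⟨hxp, hfx⟩
  have hx : inducedQuot f p q p' q' h1 h2 (Submodule.Quotient.mk ⟨x, hxp⟩) = 0 :=
    (Submodule.Quotient.mk_eq_zero _).mpr hfx
  exact (Submodule.Quotient.mk_eq_zero (q.comap p.subtype)).mp ((map_eq_zero_iff _ h).mp hx)

theorem le_map_sup_of_inducedQuot_surjective
    (h : Function.Surjective (inducedQuot f p q p' q' h1 h2)) : p' ≤ p.map f ⊔ q' := by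
  intro x hx
  obtain ⟨⟨y⟩, hy⟩ := h (Submodule.Quotient.mk ⟨x, hx⟩)
  have hxy : x - f y ∈ q' := (Submodule.Quotient.eq (q'.comap p'.subtype)).mp hy.symm
  exact Submodule.mem_sup.mpr ⟨f y, Submodule.mem_map_of_mem y.2, x - f y, hxy, by abel⟩

end InducedQuot

namespace IsWeightFiltration

variable {N : Module.End ℂ H} {W : ℤ → Submodule ℂ H}

theorem le_comap_pow (hW : IsWeightFiltration N W) (k : ℕ) {i j : ℤ} (hij : i - 2 * k = j) :
    W i ≤ (W j).comap (N ^ k) := by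
  induction k generalizing j with
  | zero => simp [← hij, Module.End.one_eq_id]
  | succ k ih =>
    obtain rfl : i - 2 * k - 2 = j := by lia
    rw [pow_succ', Module.End.mul_eq_comp, Submodule.comap_comp]
    exact (ih rfl).trans (Submodule.comap_mono (hW.map_le _))

theorem inf_ker_pow_le (hW : IsWeightFiltration N W) (i : ℕ) :
    W i ⊓ LinearMap.ker (N ^ i) ≤ W (i - 1) :=
  (inf_le_inf_left _ (LinearMap.ker_le_comap _)).trans <|
    inf_comap_le_of_inducedQuot_injective (hW.gr_bijective i (hW.le_comap_pow i (by ring))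
      (hW.le_comap_pow i (by ring))).injective

theorem le_range_pow_sup (hW : IsWeightFiltration N W) (i : ℕ) :
    W (-i) ≤ LinearMap.range (N ^ i) ⊔ W (-i - 1) :=
  (le_map_sup_of_inducedQuot_surjective (hW.gr_bijective i (hW.le_comap_pow i (by ring))
    (hW.le_comap_pow i (by ring))).surjective).trans
      (sup_le_sup_right LinearMap.map_le_range _)

theorem ker_pow_le (hW : IsWeightFiltration N W) (k : ℕ) :
    LinearMap.ker (N ^ k) ≤ W (k - 1) := by
  obtain ⟨t, ht⟩ := hW.eventually_top
  refine Nat.decreasingInduction' (n := k + (t + 1).toNat)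
    (P := fun n : ℕ => LinearMap.ker (N ^ k) ≤ W (n - 1)) (fun n _ hkn ih => ?_)
    (Nat.le_add_right _ _) ?_
  · have hker : LinearMap.ker (N ^ k) ≤ LinearMap.ker (N ^ n) := N.iterateKer.monotone hkn
    exact (le_inf (by simpa using ih) hker).trans (hW.inf_ker_pow_le n)
  · exact le_top.trans (ht _ (by lia)).ge

theorem le_range_pow (hW : IsWeightFiltration N W) (k : ℕ) :
    W (-k) ≤ LinearMap.range (N ^ k) := by
  obtain ⟨t, ht⟩ := hW.eventually_bot
  refine Nat.decreasingInduction' (n := k + (-t).toNat)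
    (P := fun n : ℕ => W (-n) ≤ LinearMap.range (N ^ k)) (fun n _ hkn ih => ?_)
    (Nat.le_add_right _ _) ?_
  · have hrange : LinearMap.range (N ^ n) ≤ LinearMap.range (N ^ k) := N.iterateRange.monotone hkn
    exact (hW.le_range_pow_sup n).trans
      (sup_le hrange (by simpa only [Nat.cast_succ, neg_add'] using ih))
  · exact (ht _ (by lia)).le.trans bot_le

theorem mem_neg_one_iff_mem_range (hW : IsWeightFiltration N W) {x : H}
    (hx : x ∈ LinearMap.ker N) : x ∈ W (-1) ↔ x ∈ LinearMap.range N := by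
  constructor
  · intro h
    simpa using hW.le_range_pow 1 h
  · rintro ⟨y, rfl⟩
    have hy : y ∈ LinearMap.ker (N ^ 2) := by
      rwa [LinearMap.mem_ker, pow_two, Module.End.mul_apply]
    simpa using hW.map_le _ (hW.ker_pow_le 2 hy)

end IsWeightFiltration

theorem kernel_pairing_descends_nondegenerate_general
    {H' : Type*} [AddCommGroup H'] [Module ℂ H']
    {S : H →ₗ[ℂ] H' →ₗ[ℂ] ℂ} (hS : Function.Bijective S)
    {N : Module.End ℂ H} {N' : Module.End ℂ H'} (hNN' : IsInfinitesimalAutomorphism S N N')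
    {W : ℤ → Submodule ℂ H} {W' : ℤ → Submodule ℂ H'}
    (hW : IsWeightFiltration N W) (hW' : IsWeightFiltration N' W') :
    (∀ a ∈ LinearMap.ker N ⊓ W (-1), ∀ b ∈ LinearMap.ker N', S a b = 0) ∧
    (∀ a ∈ LinearMap.ker N, ∀ b ∈ LinearMap.ker N' ⊓ W' (-1), S a b = 0) ∧
    ∃ T : GrQ (LinearMap.ker N) (W (-1)) →ₗ[ℂ] GrQ (LinearMap.ker N') (W' (-1)) →ₗ[ℂ] ℂ,
      (∀ (a : LinearMap.ker N) (b : LinearMap.ker N'),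
          T (Submodule.Quotient.mk a) (Submodule.Quotient.mk b) = S (a : H) (b : H')) ∧
        Nondeg T := by
  have hleft : ∀ a ∈ LinearMap.ker N, a ∈ W (-1) ↔ ∀ b ∈ LinearMap.ker N', S a b = 0 :=
    fun a ha => (hW.mem_neg_one_iff_mem_range ha).trans (hNN'.mem_range_left_iff hS)
  have hright : ∀ b ∈ LinearMap.ker N', b ∈ W' (-1) ↔ ∀ a ∈ LinearMap.ker N, S a b = 0 :=
    fun b hb => (hW'.mem_neg_one_iff_mem_range hb).trans (hNN'.mem_range_right_iff hS)
  have hker := comap_subtype_eq_ker_domRestrict₁₂ S hleft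
  have hker' := comap_subtype_eq_ker_domRestrict₁₂ S.flip hright
  exact ⟨fun a ha => (hleft a ha.1).mp ha.2, fun a ha b hb => (hright b hb.1).mp hb.2 a ha,
    (S.domRestrict₁₂ _ _).liftQ₂ _ _ hker.le hker'.le, fun _ _ => rfl,
    liftQ₂_nondegenerate _ hker hker'⟩

/-- For infinitesimal automorphisms `(N, N')` of `(H, H', S)`, the pairing
`S` vanishes on `(Ker N ∩ W^N_{-1}) × Ker N'` and on `Ker N × (Ker N' ∩ W^{N'}_{-1})`, so it
descends to a pairing `(Ker N)/(Ker N ∩ W^N_{-1}) × (Ker N')/(Ker N' ∩ W^{N'}_{-1}) → ℂ`,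
and this descended pairing is non-degenerate. -/
theorem kernel_pairing_descends_nondegenerate [FiniteDimensional ℂ H]
    {H' : Type*} [AddCommGroup H'] [Module ℂ H'] [FiniteDimensional ℂ H']
    (S : H →ₗ[ℂ] H' →ₗ[ℂ] ℂ) (hS : Nondeg S)
    {N : Module.End ℂ H} {N' : Module.End ℂ H'}
    (hN : IsNilpotent N) (hN' : IsNilpotent N')
    (hNN' : ∀ (a : H) (b : H'), S (N a) b + S a (N' b) = 0)
    {W : ℤ → Submodule ℂ H} {W' : ℤ → Submodule ℂ H'}
    (hW : IsWeightFiltration N W) (hW' : IsWeightFiltration N' W') :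
    (∀ a ∈ LinearMap.ker N ⊓ W (-1), ∀ b ∈ LinearMap.ker N', S a b = 0) ∧
    (∀ a ∈ LinearMap.ker N, ∀ b ∈ LinearMap.ker N' ⊓ W' (-1), S a b = 0) ∧
    ∃ T : GrQ (LinearMap.ker N) (W (-1)) →ₗ[ℂ] GrQ (LinearMap.ker N') (W' (-1)) →ₗ[ℂ] ℂ,
      (∀ (a : LinearMap.ker N) (b : LinearMap.ker N'),
          T (Submodule.Quotient.mk a) (Submodule.Quotient.mk b) = S (a : H) (b : H')) ∧
        Nondeg T :=
  kernel_pairing_descends_nondegenerate_general hS.bijective hNN' hW hW'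

end Paper
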